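/- For every n ≥ 1 and every t ∈ ℝ, the recurrence coefficient α_n satisfies the extended relativistic Toda lattice equation α_n'(t) = p·α_n(t)·(α_{n−1}(t) + β_{n−1}(t) − α_{n+1}(t) − β_n(t)) + q·α_n(t)·( 1/β_{n−1}(t) − 1/β_n(t) ). -/

import Mathlib

open Polynomial

/-- The moment functional `L^{(t)}` applied to `x^m · P(x)`, where the moments are
`L^{(t)}[x^k] = ν k t`. -/
noncomputable def Lmom (ν : ℤ → ℝ → ℂ) (m : ℤ) (P : Polynomial ℂ) (t : ℝ) : ℂ :=
  P.sum fun j c => c * ν (m + (j : ℤ)) t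

theorem Lmom_eq_sum (ν : ℤ → ℝ → ℂ) (m : ℤ) (P : Polynomial ℂ) (t : ℝ) (N : ℕ)
    (h : P.natDegree < N) :
    Lmom ν m P t = ∑ j ∈ Finset.range N, P.coeff j * ν (m + (j : ℤ)) t := by
  unfold Lmom
  exact Polynomial.sum_over_range' P (by simp) N h

theorem Lmom_add (ν : ℤ → ℝ → ℂ) (m : ℤ) (P R : Polynomial ℂ) (t : ℝ) :
    Lmom ν m (P + R) t = Lmom ν m P t + Lmom ν m R t := by
  unfold Lmom
  exact Polynomial.sum_add_index P R _ (by simp) (by intros; ring)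

theorem Lmom_C_mul (ν : ℤ → ℝ → ℂ) (m : ℤ) (c : ℂ) (P : Polynomial ℂ) (t : ℝ) :
    Lmom ν m (C c * P) t = c * Lmom ν m P t := by
  rw [Lmom_eq_sum ν m (C c * P) t (P.natDegree + 1)
    (Nat.lt_succ_of_le (Polynomial.natDegree_C_mul_le c P)),
    Lmom_eq_sum ν m P t (P.natDegree + 1) (Nat.lt_succ_self _), Finset.mul_sum]
  refine Finset.sum_congr rfl fun j _ => ?_
  rw [Polynomial.coeff_C_mul]; ring

theorem Lmom_sub (ν : ℤ → ℝ → ℂ) (m : ℤ) (P R : Polynomial ℂ) (t : ℝ) :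
    Lmom ν m (P - R) t = Lmom ν m P t - Lmom ν m R t := by
  have : P - R = P + C (-1) * R := by simp [sub_eq_add_neg]
  rw [this, Lmom_add, Lmom_C_mul]; ring

theorem Lmom_X_mul (ν : ℤ → ℝ → ℂ) (m : ℤ) (P : Polynomial ℂ) (t : ℝ) :
    Lmom ν m (X * P) t = Lmom ν (m + 1) P t := by
  rw [Lmom_eq_sum ν m (X * P) t (P.natDegree + 1 + 1)
    (by have := Polynomial.natDegree_mul_le (p := (X : Polynomial ℂ)) (q := P)
        rw [Polynomial.natDegree_X] at this; omega),
    Lmom_eq_sum ν (m + 1) P t (P.natDegree + 1) (Nat.lt_succ_self _), Finset.sum_range_succ']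
  simp only [Polynomial.coeff_X_mul, Polynomial.coeff_X_mul_zero, zero_mul, add_zero]
  refine Finset.sum_congr rfl fun j _ => ?_
  congr 2
  push_cast; ring

theorem Lmom_one (ν : ℤ → ℝ → ℂ) (m : ℤ) (t : ℝ) : Lmom ν m 1 t = ν m t := by
  rw [Lmom_eq_sum ν m 1 t 1 (by simp)]; simp

/-- The coefficientwise derivative (in `t`) of a family of polynomials of degree at most `n`. -/
noncomputable def Dpoly (Q : ℕ → ℝ → Polynomial ℂ) (n : ℕ) (t : ℝ) : Polynomial ℂ :=
  ∑ j ∈ Finset.range n, C (deriv (fun s => (Q n s).coeff j) t) * X ^ j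

theorem Dpoly_coeff (Q : ℕ → ℝ → Polynomial ℂ) (n : ℕ) (t : ℝ) (j : ℕ) :
    (Dpoly Q n t).coeff j = if j < n then deriv (fun s => (Q n s).coeff j) t else 0 := by
  simp [Dpoly, Polynomial.coeff_X_pow]

theorem Dpoly_degree (Q : ℕ → ℝ → Polynomial ℂ) (n : ℕ) (t : ℝ) :
    (Dpoly Q n t).degree < n := by
  rw [Polynomial.degree_lt_iff_coeff_zero]
  intro m hm
  rw [Dpoly_coeff, if_neg (by omega)]

theorem Lmom_hasDerivAt (p q : ℂ) (ν : ℤ → ℝ → ℂ)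
    (hνdiff : ∀ k, Differentiable ℝ (ν k))
    (hνderiv : ∀ k t, deriv (ν k) t = -(p * ν (k + 1) t + q * ν (k - 1) t))
    (Q : ℕ → ℝ → Polynomial ℂ)
    (hQmonic : ∀ n t, (Q n t).Monic)
    (hQdeg : ∀ n t, (Q n t).natDegree = n)
    (hQdiff : ∀ n j, Differentiable ℝ fun t => (Q n t).coeff j) (n : ℕ) (m : ℤ) (t : ℝ) :
    HasDerivAt (fun s => Lmom ν m (Q n s) s)
      (Lmom ν m (Dpoly Q n t) t
        - (p * Lmom ν (m + 1) (Q n t) t + q * Lmom ν (m - 1) (Q n t) t)) t := by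
  have e : ∀ (k : ℤ) (s : ℝ), Lmom ν k (Q n s) s
      = ∑ j ∈ Finset.range (n + 1), (Q n s).coeff j * ν (k + (j : ℤ)) s := fun k s =>
    Lmom_eq_sum ν k (Q n s) s (n + 1) (by rw [hQdeg]; omega)
  have eD : Lmom ν m (Dpoly Q n t) t
      = ∑ j ∈ Finset.range (n + 1), (Dpoly Q n t).coeff j * ν (m + (j : ℤ)) t :=
    Lmom_eq_sum ν m _ t (n + 1) (by
      have h1 : (Dpoly Q n t).natDegree ≤ n :=
        Polynomial.natDegree_le_of_degree_le (Dpoly_degree Q n t).le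
      omega)
  have hd : ∀ j ∈ Finset.range (n + 1),
      HasDerivAt (fun s => (Q n s).coeff j) ((Dpoly Q n t).coeff j) t := by
    intro j hj
    rw [Dpoly_coeff]
    split_ifs with hlt
    · exact (hQdiff n j t).hasDerivAt
    · have hjn : j = n := by have := Finset.mem_range.1 hj; omega
      subst hjn
      have : (fun s => (Q j s).coeff j) = fun _ => (1 : ℂ) := by
        funext s
        have := hQmonic j s
        rw [Polynomial.Monic, Polynomial.leadingCoeff, hQdeg] at this
        exact this
      rw [this]; exact hasDerivAt_const _ _
  have hn : ∀ k : ℤ, HasDerivAt (ν k) (-(p * ν (k + 1) t + q * ν (k - 1) t)) t := by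
    intro k; rw [← hνderiv]; exact (hνdiff k t).hasDerivAt
  have main := HasDerivAt.fun_sum (fun j hj => (hd j hj).mul (hn (m + (j : ℤ))))
  have hf : (fun s => Lmom ν m (Q n s) s)
      = fun s => ∑ j ∈ Finset.range (n + 1), (Q n s).coeff j * ν (m + (j : ℤ)) s :=
    funext fun s => e m s
  rw [hf]
  refine main.congr_deriv ?_
  rw [eD, e, e, Finset.mul_sum, Finset.mul_sum, ← Finset.sum_add_distrib,
    ← Finset.sum_sub_distrib]
  refine Finset.sum_congr rfl fun j _ => ?_
  rw [show m + 1 + (j : ℤ) = m + j + 1 by ring, show m - 1 + (j : ℤ) = m + j - 1 by ring]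
  ring

/-- Uniqueness: a polynomial of degree `< n` killed by `L[x^{-k} ·]`, `1 ≤ k ≤ n`, vanishes. -/
theorem Lmom_unique (ν : ℤ → ℝ → ℂ) (t : ℝ) (Q : ℕ → Polynomial ℂ)
    (hm : ∀ n, (Q n).Monic) (hdeg : ∀ n, (Q n).natDegree = n)
    (horth : ∀ n k : ℕ, 1 ≤ k → k ≤ n → Lmom ν (-(k : ℤ)) (Q n) t = 0)
    (hρ : ∀ n : ℕ, Lmom ν (-((n + 1 : ℕ) : ℤ)) (Q n) t ≠ 0) :
    ∀ (n : ℕ) (R : Polynomial ℂ), R.degree < n →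
      (∀ k : ℕ, 1 ≤ k → k ≤ n → Lmom ν (-(k : ℤ)) R t = 0) → R = 0 := by
  intro n
  induction n with
  | zero =>
    intro R hR _
    ext j
    exact (Polynomial.degree_lt_iff_coeff_zero R 0).1 hR j (Nat.zero_le _)
  | succ n ih =>
    intro R hR h
    have h0 : R - C (R.coeff n) * Q n = 0 := by
      apply ih
      · rw [Polynomial.degree_lt_iff_coeff_zero] at hR ⊢
        intro j hj
        rw [Polynomial.coeff_sub, Polynomial.coeff_C_mul]
        rcases Nat.eq_or_lt_of_le hj with rfl | hj
        · have := hm n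
          rw [Polynomial.Monic, Polynomial.leadingCoeff, hdeg] at this
          rw [this]; ring
        · rw [hR j hj, Polynomial.coeff_eq_zero_of_natDegree_lt (p := Q n) (by rw [hdeg]; exact hj)]
          ring
      · intro k hk hkn
        rw [Lmom_sub, Lmom_C_mul, horth n k hk hkn, h k hk (by omega)]; ring
    have h1 : R = C (R.coeff n) * Q n := sub_eq_zero.1 h0
    have h2 := h (n + 1) (by omega) le_rfl
    rw [h1, Lmom_C_mul] at h2
    rcases mul_eq_zero.1 h2 with h3 | h3
    · rw [h1, h3]; simp
    · exact absurd h3 (hρ n)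

theorem stmt_1 (p q : ℂ) (ν : ℤ → ℝ → ℂ)
    (hνdiff : ∀ k, Differentiable ℝ (ν k))
    (hνderiv : ∀ k t, deriv (ν k) t = -(p * ν (k + 1) t + q * ν (k - 1) t))
    (hν0 : ∀ t, ν 0 t ≠ 0)
    (Q : ℕ → ℝ → Polynomial ℂ)
    (hQ0 : ∀ t, Q 0 t = 1)
    (hQmonic : ∀ n t, (Q n t).Monic)
    (hQdeg : ∀ n t, (Q n t).natDegree = n)
    (hQdiff : ∀ n j, Differentiable ℝ fun t => (Q n t).coeff j)
    (β α : ℕ → ℝ → ℂ)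
    (hβdiff : ∀ n, Differentiable ℝ (β n))
    (hαdiff : ∀ n, Differentiable ℝ (α n))
    (hβ0 : ∀ t, β 0 t = 1) (hα0 : ∀ t, α 0 t = -1) (hα1 : ∀ t, α 1 t = 0)
    (hβne : ∀ n, 1 ≤ n → ∀ t, β n t ≠ 0)
    (hαne : ∀ n, 1 ≤ n → ∀ t, α (n + 1) t ≠ 0)
    (horth : ∀ n : ℕ, 1 ≤ n → ∀ s < n, ∀ t : ℝ, Lmom ν (-(n : ℤ) + (s : ℤ)) (Q n t) t = 0)
    (hQ1 : ∀ t, Q 1 t = X - C (β 1 t))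
    (hrec : ∀ n, 1 ≤ n → ∀ t,
      Q (n + 1) t = (X - C (β (n + 1) t)) * Q n t - C (α (n + 1) t) * (X * Q (n - 1) t)) :
    ∀ n, 1 ≤ n → ∀ t : ℝ,
      deriv (α n) t =
        p * α n t * (α (n - 1) t + β (n - 1) t - α (n + 1) t - β n t) +
          q * α n t * (1 / β (n - 1) t - 1 / β n t) := by
  have H : ∀ (t : ℝ) (n k : ℕ), 1 ≤ k → k ≤ n → Lmom ν (-(k : ℤ)) (Q n t) t = 0 := by
    intro t n k hk hkn
    have := horth n (by omega) (n - k) (by omega) t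
    rwa [show -(n : ℤ) + ((n - k : ℕ) : ℤ) = -(k : ℤ) by omega] at this
  -- functional applied to the recurrence
  have Lrec : ∀ (t : ℝ) (n : ℕ) (m : ℤ), Lmom ν m (Q (n + 2) t) t
      = Lmom ν (m + 1) (Q (n + 1) t) t - β (n + 2) t * Lmom ν m (Q (n + 1) t) t
        - α (n + 2) t * Lmom ν (m + 1) (Q n t) t := by
    intro t n m
    rw [hrec (n + 1) (by omega) t, Lmom_sub, sub_mul, Lmom_sub, Lmom_C_mul, Lmom_C_mul,
      Lmom_X_mul, Lmom_X_mul]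
    rfl
  have L1 : ∀ (t : ℝ) (m : ℤ), Lmom ν m (Q 1 t) t = ν (m + 1) t - β 1 t * ν m t := by
    intro t m
    rw [hQ1, Lmom_sub, ← mul_one X, ← mul_one (C (β 1 t)), Lmom_X_mul, Lmom_C_mul,
      Lmom_one, Lmom_one]
  have L0 : ∀ (t : ℝ) (m : ℤ), Lmom ν m (Q 0 t) t = ν m t := by
    intro t m; rw [hQ0, Lmom_one]
  -- sigma
  have Hσ : ∀ (t : ℝ) (n : ℕ),
      Lmom ν 0 (Q (n + 1) t) t = α (n + 2) t * Lmom ν 0 (Q n t) t := by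
    intro t n
    have h1 := Lrec t n (-1)
    have h2 := H t (n + 2) 1 le_rfl (by omega)
    have h3 := H t (n + 1) 1 le_rfl (by omega)
    simp only [Nat.cast_one] at h2 h3
    rw [h2, h3] at h1
    norm_num at h1
    linear_combination -h1
  have σne : ∀ (t : ℝ) (n : ℕ), Lmom ν 0 (Q n t) t ≠ 0 := by
    intro t n
    induction n with
    | zero => rw [L0]; exact hν0 t
    | succ n ih => rw [Hσ]; exact mul_ne_zero (hαne (n + 1) (by omega) t) ih
  -- rho
  have Hρ0 : ∀ t, ν 0 t = β 1 t * ν (-1) t := by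
    intro t
    have h2 := H t 1 1 le_rfl le_rfl
    simp only [Nat.cast_one] at h2
    rw [L1] at h2
    norm_num at h2
    linear_combination h2
  have Hρ : ∀ (t : ℝ) (n : ℕ),
      β (n + 2) t * Lmom ν (-((n + 2 : ℕ) : ℤ)) (Q (n + 1) t) t
        = -α (n + 2) t * Lmom ν (-((n + 1 : ℕ) : ℤ)) (Q n t) t := by
    intro t n
    have h1 := Lrec t n (-((n + 2 : ℕ) : ℤ))
    have h2 := H t (n + 2) (n + 2) (by omega) le_rfl
    have h3 := H t (n + 1) (n + 1) (by omega) le_rfl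
    rw [h2, show -((n + 2 : ℕ) : ℤ) + 1 = -((n + 1 : ℕ) : ℤ) by push_cast; ring, h3] at h1
    linear_combination h1
  have ρne : ∀ (t : ℝ) (n : ℕ), Lmom ν (-((n + 1 : ℕ) : ℤ)) (Q n t) t ≠ 0 := by
    intro t n
    induction n with
    | zero =>
      rw [L0]
      intro h
      have h' := Hρ0 t
      simp only [zero_add, Nat.cast_one] at h
      rw [h, mul_zero] at h'
      exact hν0 t h'
    | succ n ih =>
      intro h
      have h' := Hρ t n
      rw [h, mul_zero] at h'
      exact mul_ne_zero (neg_ne_zero.2 (hαne (n + 1) (by omega) t)) ih h'.symm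
  have LD := Lmom_hasDerivAt p q ν hνdiff hνderiv Q hQmonic hQdeg hQdiff
  -- derivative of the orthogonality relations
  have HD : ∀ (t : ℝ) (n k : ℕ), 1 ≤ k → k ≤ n → Lmom ν (-(k : ℤ)) (Dpoly Q n t) t
      = p * Lmom ν (-(k : ℤ) + 1) (Q n t) t + q * Lmom ν (-(k : ℤ) - 1) (Q n t) t := by
    intro t n k hk hkn
    have h1 := LD n (-(k : ℤ)) t
    have h2 : (fun s => Lmom ν (-(k : ℤ)) (Q n s) s) = fun _ => (0 : ℂ) :=
      funext fun s => H s n k hk hkn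
    rw [h2] at h1
    have h3 := h1.unique (hasDerivAt_const t (0 : ℂ))
    linear_combination h3
  -- explicit formula for the derivative of Q
  have HDQ : ∀ (t : ℝ) (n : ℕ), Dpoly Q (n + 1) t
      - (C (-(p * α (n + 2) t)) * (Q (n + 1) t - X * Q n t)
        + C (-(q * α (n + 2) t / β (n + 2) t)) * Q n t) = 0 := by
    intro t n
    have hβ := hβne (n + 2) (by omega) t
    apply Lmom_unique ν t (fun n => Q n t) (fun n => hQmonic n t) (fun n => hQdeg n t)
      (H t) (ρne t) (n + 1)
    · have hc : ∀ n, (Q n t).coeff n = 1 := by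
        intro n
        have := hQmonic n t
        rwa [Polynomial.Monic, Polynomial.leadingCoeff, hQdeg] at this
      have hz : ∀ n j, n < j → (Q n t).coeff j = 0 := fun n j h =>
        Polynomial.coeff_eq_zero_of_natDegree_lt (by rw [hQdeg]; exact h)
      rw [Polynomial.degree_lt_iff_coeff_zero]
      intro j hj
      obtain ⟨i, rfl⟩ : ∃ i, j = i + 1 := ⟨j - 1, by omega⟩
      simp only [Polynomial.coeff_sub, Polynomial.coeff_add, Polynomial.coeff_C_mul,
        Polynomial.coeff_X_mul, Dpoly_coeff]
      rw [if_neg (by omega), hz n (i + 1) (by omega)]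
      rcases Nat.eq_or_lt_of_le hj with h | h
      · obtain rfl : n = i := by omega
        rw [hc, hc]; ring
      · rw [hz (n + 1) (i + 1) h, hz n i (by omega)]; ring
    · intro k hk hkn
      rw [Lmom_sub, Lmom_add, Lmom_C_mul, Lmom_C_mul, Lmom_sub, Lmom_X_mul, HD t (n + 1) k hk hkn,
        H t (n + 1) k hk hkn]
      -- the `p` part
      have hp : Lmom ν (-(k : ℤ) + 1) (Q (n + 1) t) t
          = α (n + 2) t * Lmom ν (-(k : ℤ) + 1) (Q n t) t := by
        rcases Nat.eq_or_lt_of_le hk with h | h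
        · subst h
          simpa using Hσ t n
        · have a1 := H t (n + 1) (k - 1) (by omega) (by omega)
          have a2 := H t n (k - 1) (by omega) (by omega)
          rw [show -((k - 1 : ℕ) : ℤ) = -(k : ℤ) + 1 by omega] at a1 a2
          rw [a1, a2, mul_zero]
      have hq : Lmom ν (-(k : ℤ) - 1) (Q (n + 1) t) t
          = -(α (n + 2) t / β (n + 2) t) * Lmom ν (-(k : ℤ)) (Q n t) t := by
        rcases Nat.eq_or_lt_of_le hkn with h | h
        · subst h
          have a := Hρ t n
          rw [show -((n + 2 : ℕ) : ℤ) = -((n + 1 : ℕ) : ℤ) - 1 by push_cast; ring] at a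
          field_simp
          linear_combination a
        · have a1 := H t (n + 1) (k + 1) (by omega) (by omega)
          have a2 := H t n k (by omega) (by omega)
          rw [show -((k + 1 : ℕ) : ℤ) = -(k : ℤ) - 1 by push_cast; ring] at a1
          rw [a1, a2, mul_zero]
      rw [hp, hq]
      ring
  -- derivative of sigma
  have Dσ : ∀ (t : ℝ) (n : ℕ), HasDerivAt (fun s => Lmom ν 0 (Q n s) s)
      (-(p * (α (n + 2) t + β (n + 1) t + α (n + 1) t) + q / β (n + 1) t)
        * Lmom ν 0 (Q n t) t) t := by
    intro t n
    refine (LD n 0 t).congr_deriv ?_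
    have hβ := hβne (n + 1) (by omega) t
    cases n with
    | zero =>
      have hD : Dpoly Q 0 t = C 0 * 0 := by simp [Dpoly]
      have a := Hσ t 0
      rw [L1, L0] at a
      have b := Hρ0 t
      rw [hD, Lmom_C_mul, L0, L0, L0]
      simp only [zero_add, zero_sub] at a hβ ⊢
      rw [hα1]
      have b' : ν (-1) t = ν 0 t / β 1 t := by rw [b]; field_simp
      rw [b']
      linear_combination (-p) * a
    | succ n =>
      have hβ : β (n + 2) t ≠ 0 := hβ
      have a := Lrec t (n) 0
      have s1 := Hσ t (n + 1)
      have s2 := Hσ t n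
      have h1 := H t (n + 1) 1 le_rfl (by omega)
      rw [sub_eq_zero.1 (HDQ t n), Lmom_add, Lmom_C_mul, Lmom_C_mul, Lmom_sub, Lmom_X_mul]
      simp only [zero_add, zero_sub, Nat.cast_one, Nat.add_assoc, Nat.reduceAdd] at a s1 s2 h1 ⊢
      rw [h1]
      linear_combination p * a - p * s1 + q / β (n + 2) t * s2
  intro n hn t
  obtain ⟨n, rfl⟩ : ∃ k, n = k + 1 := ⟨n - 1, by omega⟩
  cases n with
  | zero =>
    have : α 1 = fun _ => (0 : ℂ) := funext hα1
    simp [this]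
  | succ n =>
    have hf : α (n + 2) = fun s => Lmom ν 0 (Q (n + 1) s) s / Lmom ν 0 (Q n s) s := by
      funext s
      rw [Hσ, mul_div_assoc, div_self (σne s n), mul_one]
    have hd := (Dσ t (n + 1)).fun_div (Dσ t n) (σne t n)
    rw [← hf] at hd
    have hσ := σne t n
    have hd' := hd.deriv
    rw [Hσ t n] at hd'
    simp only [Nat.add_assoc, Nat.reduceAdd, Nat.add_sub_cancel] at hd' ⊢
    rw [hd', show n + 2 - 1 = n + 1 from rfl]
    have b1 := hβne (n + 1) (by omega) t
    have b2 := hβne (n + 2) (by omega) t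
    field_simp
    ring
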